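/- Let a_i ≥ a_i' > 0 and 0 < b_i ≤ b_i' for i = 1,…,n. If the function x ↦ ∏_{i=1}^n sinh(a_i·x)/sinh(b_i·x) (extended by continuity at x = 0) is infinitely divisible, then the function x ↦ ∏_{i=1}^n sinh(a_i'·x)/sinh(b_i'·x) (extended by continuity at x = 0) is infinitely divisible. -/

import Mathlib

open scoped ComplexOrder

/-- A function `φ : ℝ → ℂ` is positive definite if for every `n`, all real numbers
`x 1, …, x n` and complex numbers `c 1, …, c n`, the sum
`∑ i j, c i * conj (c j) * φ (x i - x j)` is a nonnegative real number. -/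
def IsPosDefFun (φ : ℝ → ℂ) : Prop :=
  ∀ (n : ℕ) (x : Fin n → ℝ) (c : Fin n → ℂ),
    0 ≤ ∑ i, ∑ j, c i * (starRingEnd ℂ) (c j) * φ (x i - x j)

/-- A real-valued function is infinitely divisible if every positive real power of it
is positive definite. -/
def IsInfDivFun (φ : ℝ → ℝ) : Prop :=
  ∀ r : ℝ, 0 < r → IsPosDefFun fun x => ((φ x ^ r : ℝ) : ℂ)

/-- The function `x ↦ ∏ i, sinh (a i * x) / sinh (b i * x)`, extended by continuity
at `x = 0` (where it takes the value `∏ i, a i / b i`). -/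
noncomputable def sinhProd {n : ℕ} (a b : Fin n → ℝ) (x : ℝ) : ℝ :=
  if x = 0 then ∏ i, a i / b i else ∏ i, Real.sinh (a i * x) / Real.sinh (b i * x)

open Filter Topology

namespace IsPosDefFun

variable {φ ψ : ℝ → ℂ}

theorem map_neg (h : IsPosDefFun φ) (t : ℝ) : star (φ t) = φ (-t) := by
  have h0 := h 1 ![0] ![1]
  have h1 := h 2 ![t, 0] ![1, 1]
  have h2 := h 2 ![t, 0] ![1, Complex.I]
  simp [Fin.sum_univ_two, Complex.le_def] at h0 h1 h2
  apply Complex.ext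
  · simp
    linarith [h2.2, h0.2]
  · simp
    linarith [h1.2, h0.2]

theorem posSemidef (h : IsPosDefFun φ) {n : ℕ} (x : Fin n → ℝ) :
    (Matrix.of fun i j => φ (x i - x j)).PosSemidef := by
  rw [Matrix.posSemidef_iff_dotProduct_mulVec]
  refine ⟨?_, fun c => ?_⟩
  · ext i j
    simp only [Matrix.conjTranspose_apply, Matrix.of_apply]
    rw [h.map_neg, neg_sub]
  · convert! h n x (star c) using 1
    simp only [dotProduct, Matrix.mulVec, Finset.mul_sum, Matrix.of_apply, Pi.star_apply]
    refine Finset.sum_congr rfl fun i _ => Finset.sum_congr rfl fun j _ => ?_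
    simp
    ring

theorem of_posSemidef
    (h : ∀ (n : ℕ) (x : Fin n → ℝ), (Matrix.of fun i j => φ (x i - x j)).PosSemidef) :
    IsPosDefFun φ := by
  intro n x c
  have := (Matrix.posSemidef_iff_dotProduct_mulVec.1 (h n x)).2 (star c)
  convert! this using 1
  simp only [dotProduct, Matrix.mulVec, Finset.mul_sum, Matrix.of_apply, star_star,
    Pi.star_apply, starRingEnd_apply]
  refine Finset.sum_congr rfl fun i _ => Finset.sum_congr rfl fun j _ => ?_
  ring

theorem mul (hφ : IsPosDefFun φ) (hψ : IsPosDefFun ψ) : IsPosDefFun fun x => φ x * ψ x :=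
  of_posSemidef fun _ x => (hφ.posSemidef x).hadamard (hψ.posSemidef x)

theorem add (hφ : IsPosDefFun φ) (hψ : IsPosDefFun ψ) : IsPosDefFun fun x => φ x + ψ x :=
  of_posSemidef fun _ x => (hφ.posSemidef x).add (hψ.posSemidef x)

theorem const {c : ℝ} (hc : 0 ≤ c) : IsPosDefFun fun _ => (c : ℂ) := by
  intro n x d
  have : ∑ i, ∑ j, d i * (starRingEnd ℂ) (d j) * (c : ℂ)
      = ((Complex.normSq (∑ i, d i) * c : ℝ) : ℂ) := by
    simp_rw [← Finset.sum_mul, ← Finset.mul_sum, ← Finset.sum_mul]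
    rw [← map_sum, Complex.mul_conj]
    push_cast
    rfl
  rw [this]
  exact Complex.zero_le_real.2 (mul_nonneg (Complex.normSq_nonneg _) hc)

theorem pow (hφ : IsPosDefFun φ) (k : ℕ) : IsPosDefFun fun x => φ x ^ k := by
  induction k with
  | zero => simpa using const zero_le_one
  | succ k ih => simpa only [pow_succ] using ih.mul hφ

theorem sum {ι : Type*} (s : Finset ι) {f : ι → ℝ → ℂ} (h : ∀ i ∈ s, IsPosDefFun (f i)) :
    IsPosDefFun fun x => ∑ i ∈ s, f i x := by
  classical
  induction s using Finset.induction_on with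
  | empty => simpa using const le_rfl
  | insert i s hi ih =>
    simp_rw [Finset.sum_insert hi]
    exact (h i (by simp)).add (ih fun j hj => h j (by simp [hj]))

theorem comp_mul_left (hφ : IsPosDefFun φ) (a : ℝ) : IsPosDefFun fun x => φ (a * x) := by
  intro n x c
  simpa only [mul_sub] using hφ n (fun i => a * x i) c

theorem of_tendsto {f : ℕ → ℝ → ℂ} (h : ∀ k, IsPosDefFun (f k))
    (hf : ∀ x, Tendsto (fun k => f k x) atTop (𝓝 (φ x))) : IsPosDefFun φ := by
  intro n x c
  refine ge_of_tendsto' (tendsto_finsetSum _ fun i _ => tendsto_finsetSum _ fun j _ =>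
    (hf (x i - x j)).const_mul (c i * (starRingEnd ℂ) (c j))) fun k => h k n x c

theorem of_hasSum {f : ℕ → ℝ → ℂ} (h : ∀ k, IsPosDefFun (f k))
    (hf : ∀ x, HasSum (fun k => f k x) (φ x)) : IsPosDefFun φ :=
  of_tendsto (fun k => sum (Finset.range k) fun i _ => h i) fun x => (hf x).tendsto_sum_nat

theorem cexp (hφ : IsPosDefFun φ) : IsPosDefFun fun x => Complex.exp (φ x) := by
  refine of_hasSum (f := fun k x => (((k.factorial : ℝ)⁻¹ : ℝ) : ℂ) * φ x ^ k)
    (fun k => (const (by positivity)).mul (hφ.pow k)) fun x => ?_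
  have := NormedSpace.expSeries_div_hasSum_exp (φ x)
  rw [← Complex.exp_eq_exp_ℂ] at this
  convert! this using 2 with k
  push_cast
  ring

theorem inv_one_sub_mul_I : IsPosDefFun fun x => (1 - x * Complex.I)⁻¹ := by
  intro n x c
  have hre (i j : Fin n) : (-(1 - ((x i - x j : ℝ) : ℂ) * Complex.I)).re < 0 := by simp
  have key : ∑ i, ∑ j, c i * (starRingEnd ℂ) (c j) * (1 - ((x i - x j : ℝ) : ℂ) * Complex.I)⁻¹
      = ∫ t : ℝ in Set.Ioi 0, ∑ i, ∑ j, c i * (starRingEnd ℂ) (c j) *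
          Complex.exp (-(1 - ((x i - x j : ℝ) : ℂ) * Complex.I) * t) := by
    have hint (i j : Fin n) := (integrableOn_exp_mul_complex_Ioi (hre i j) 0).const_mul
      (c i * (starRingEnd ℂ) (c j))
    rw [MeasureTheory.integral_finsetSum _ fun i _ =>
      MeasureTheory.integrable_finsetSum _ fun j _ => hint i j]
    refine Finset.sum_congr rfl fun i _ => ?_
    rw [MeasureTheory.integral_finsetSum _ fun j _ => hint i j]
    refine Finset.sum_congr rfl fun j _ => ?_
    rw [MeasureTheory.integral_const_mul, integral_exp_mul_complex_Ioi (hre i j)]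
    simp only [Complex.ofReal_zero, mul_zero, Complex.exp_zero, neg_div_neg_eq, one_div]
  have key2 (t : ℝ) : ∑ i, ∑ j, c i * (starRingEnd ℂ) (c j) *
          Complex.exp (-(1 - ((x i - x j : ℝ) : ℂ) * Complex.I) * t)
      = ((Real.exp (-t) *
          Complex.normSq (∑ i, c i * Complex.exp (x i * t * Complex.I)) : ℝ) : ℂ) := by
    rw [Complex.ofReal_mul, ← Complex.mul_conj, map_sum, Finset.sum_mul_sum, Finset.mul_sum]
    refine Finset.sum_congr rfl fun i _ => ?_
    rw [Finset.mul_sum]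
    refine Finset.sum_congr rfl fun j _ => ?_
    have : Complex.exp (-(1 - ((x i - x j : ℝ) : ℂ) * Complex.I) * t)
        = Complex.exp (-t) * Complex.exp (x i * t * Complex.I) *
          Complex.exp (-(x j * t * Complex.I)) := by
      rw [← Complex.exp_add, ← Complex.exp_add]
      push_cast
      ring_nf
    rw [this, map_mul, ← Complex.exp_conj]
    simp only [map_mul, Complex.conj_ofReal, Complex.conj_I, Complex.ofReal_exp,
      Complex.ofReal_neg, mul_neg]
    ring
  change 0 ≤ ∑ i, ∑ j, c i * (starRingEnd ℂ) (c j) * (1 - ((x i - x j : ℝ) : ℂ) * Complex.I)⁻¹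
  rw [key]
  simp_rw [key2]
  rw [integral_complex_ofReal]
  exact Complex.zero_le_real.2 (MeasureTheory.integral_nonneg fun t =>
    mul_nonneg (Real.exp_nonneg _) (Complex.normSq_nonneg _))

theorem inv_one_add_mul_sq {α : ℝ} (hα : 0 ≤ α) :
    IsPosDefFun fun x => (((1 + α * x ^ 2)⁻¹ : ℝ) : ℂ) := by
  have h := (const (c := 1 / 2) (by norm_num)).mul
    ((inv_one_sub_mul_I.comp_mul_left (√α)).add (inv_one_sub_mul_I.comp_mul_left (-√α)))
  convert! h using 2 with x
  have hp : (1 - ((√α * x : ℝ) : ℂ) * Complex.I) ≠ 0 := fun h0 => by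
    simpa using congrArg Complex.re h0
  have hm : (1 - ((-√α * x : ℝ) : ℂ) * Complex.I) ≠ 0 := fun h0 => by
    simpa using congrArg Complex.re h0
  have hprod : (1 - ((√α * x : ℝ) : ℂ) * Complex.I) * (1 - ((-√α * x : ℝ) : ℂ) * Complex.I)
      = ((1 + α * x ^ 2 : ℝ) : ℂ) := by
    nth_rewrite 3 [← Real.sq_sqrt hα]
    push_cast
    linear_combination -(√α : ℂ) ^ 2 * x ^ 2 * Complex.I_sq
  have hsum : (1 - ((√α * x : ℝ) : ℂ) * Complex.I) + (1 - ((-√α * x : ℝ) : ℂ) * Complex.I) = 2 := by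
    push_cast
    ring
  rw [Complex.ofReal_inv, ← hprod, inv_add_inv hp hm, hsum]
  push_cast
  ring

end IsPosDefFun

namespace IsInfDivFun

variable {f g : ℝ → ℝ}

theorem mul (hf : IsInfDivFun f) (hg : IsInfDivFun g) (hf0 : ∀ x, 0 ≤ f x) (hg0 : ∀ x, 0 ≤ g x) :
    IsInfDivFun fun x => f x * g x := by
  intro r hr
  simp_rw [Real.mul_rpow (hf0 _) (hg0 _), Complex.ofReal_mul]
  exact (hf r hr).mul (hg r hr)

theorem const {c : ℝ} (hc : 0 ≤ c) : IsInfDivFun fun _ => c :=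
  fun r _ => IsPosDefFun.const (Real.rpow_nonneg hc r)

theorem prod {ι : Type*} (s : Finset ι) {f : ι → ℝ → ℝ} (h : ∀ i ∈ s, IsInfDivFun (f i))
    (h0 : ∀ i ∈ s, ∀ x, 0 ≤ f i x) : IsInfDivFun fun x => ∏ i ∈ s, f i x := by
  classical
  induction s using Finset.induction_on with
  | empty => simpa using const zero_le_one
  | insert i s hi ih =>
    simp_rw [Finset.prod_insert hi]
    exact (h i (by simp)).mul
      (ih (fun j hj => h j (by simp [hj])) fun j hj => h0 j (by simp [hj])) (h0 i (by simp))
      fun x => Finset.prod_nonneg fun j hj => h0 j (by simp [hj]) x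

theorem of_tendsto {F : ℕ → ℝ → ℝ} (h : ∀ k, IsInfDivFun (F k))
    (hF : ∀ x, Tendsto (fun k => F k x) atTop (𝓝 (f x))) : IsInfDivFun f :=
  fun r hr => IsPosDefFun.of_tendsto (fun k => h k r hr) fun x =>
    (Complex.continuous_ofReal.tendsto _).comp ((hF x).rpow_const (Or.inr hr.le))

theorem one_add_sq_div_one_add_sq {α β : ℝ} (hα : 0 < α) (hαβ : α ≤ β) :
    IsInfDivFun fun x => (1 + α * x ^ 2) / (1 + β * x ^ 2) := by
  intro r hr
  have hβ : 0 < β := hα.trans_le hαβ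
  have hq0 : 0 ≤ 1 - α / β := sub_nonneg.2 ((div_le_one hβ).2 hαβ)
  have hq1 : 1 - α / β < 1 := sub_lt_self _ (by positivity)
  have hpos (x : ℝ) : 0 < 1 - (1 - α / β) * (1 + α * x ^ 2)⁻¹ := by
    have h1 : (1 + α * x ^ 2)⁻¹ ≤ 1 := inv_le_one_of_one_le₀ (by nlinarith [sq_nonneg x])
    nlinarith
  have hlog : IsPosDefFun fun x =>
      ((-Real.log (1 - (1 - α / β) * (1 + α * x ^ 2)⁻¹) : ℝ) : ℂ) := by
    refine IsPosDefFun.of_hasSum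
      (f := fun k x => (((1 - α / β) ^ (k + 1) / (k + 1) : ℝ) : ℂ) *
        (((1 + α * x ^ 2)⁻¹ : ℝ) : ℂ) ^ (k + 1))
      (fun k => (IsPosDefFun.const (by positivity)).mul
        ((IsPosDefFun.inv_one_add_mul_sq hα.le).pow _)) fun x => ?_
    have habs : |(1 - α / β) * (1 + α * x ^ 2)⁻¹| < 1 := by
      rw [abs_of_nonneg (by positivity)]
      linarith [hpos x]
    convert! Complex.hasSum_ofReal.2 (Real.hasSum_pow_div_log_of_abs_lt_one habs) using 2 with k
    rw [← Complex.ofReal_pow, ← Complex.ofReal_mul, mul_pow, div_mul_eq_mul_div]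
  have h := (IsPosDefFun.const (c := (α / β) ^ r) (by positivity)).mul
    ((IsPosDefFun.const hr.le).mul hlog).cexp
  convert! h using 2 with x
  rw [← Complex.ofReal_mul, ← Complex.ofReal_exp, ← Complex.ofReal_mul, Complex.ofReal_inj,
    mul_comm r, Real.exp_mul, Real.exp_neg, Real.exp_log (hpos x),
    ← Real.mul_rpow (by positivity) (inv_nonneg.2 (hpos x).le)]
  congr 1
  have h1 : 1 - (1 - α / β) * (1 + α * x ^ 2)⁻¹
      = (α / β) * ((1 + β * x ^ 2) / (1 + α * x ^ 2)) := by
    field_simp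
    ring
  rw [h1]
  field_simp

end IsInfDivFun

theorem Real.tendsto_euler_sinh_prod (y : ℝ) :
    Tendsto (fun n : ℕ => y * ∏ j ∈ Finset.range n, (1 + (Real.pi * (j + 1))⁻¹ ^ 2 * y ^ 2)) atTop
      (𝓝 (Real.sinh y)) := by
  have hpi : (Real.pi : ℂ) ≠ 0 := by exact_mod_cast Real.pi_ne_zero
  have h := (Complex.tendsto_euler_sin_prod (y * Complex.I / Real.pi)).mul_const (-Complex.I)
  rw [mul_div_cancel₀ _ hpi, Complex.sin_mul_I] at h
  have h' := (Complex.continuous_re.tendsto _).comp h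
  have hI : Complex.sinh y * Complex.I * -Complex.I = ((Real.sinh y : ℝ) : ℂ) := by
    rw [Complex.ofReal_sinh]
    linear_combination -Complex.sinh y * Complex.I_sq
  rw [hI, Complex.ofReal_re] at h'
  refine h'.congr fun n => ?_
  rw [Function.comp_apply, ← Complex.ofReal_re (y * _)]
  congr 1
  have hfac (j : ℕ) : (1 : ℂ) - (y * Complex.I / Real.pi) ^ 2 / ((j : ℂ) + 1) ^ 2
      = 1 + ((Real.pi : ℂ) * (j + 1))⁻¹ ^ 2 * y ^ 2 := by
    rw [div_pow, mul_pow, Complex.I_sq]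
    have : (j : ℂ) + 1 ≠ 0 := Nat.cast_add_one_ne_zero j
    field_simp
    ring
  simp_rw [hfac]
  push_cast
  linear_combination -(y : ℂ) *
    (∏ j ∈ Finset.range n, (1 + ((Real.pi : ℂ) * (j + 1))⁻¹ ^ 2 * (y : ℂ) ^ 2)) * Complex.I_sq

/-- The quotient `sinh (a * x) / sinh (b * x)`, extended by continuity at `x = 0`. -/
noncomputable def sinhQuot (a b x : ℝ) : ℝ :=
  if x = 0 then a / b else Real.sinh (a * x) / Real.sinh (b * x)

theorem sinhProd_eq_prod_sinhQuot {n : ℕ} (a b : Fin n → ℝ) (x : ℝ) :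
    sinhProd a b x = ∏ i, sinhQuot (a i) (b i) x := by
  unfold sinhProd sinhQuot
  split_ifs <;> rfl

theorem sinhQuot_nonneg {a b : ℝ} (ha : 0 < a) (hb : 0 < b) (x : ℝ) : 0 ≤ sinhQuot a b x := by
  unfold sinhQuot
  split_ifs with hx
  · positivity
  · rcases lt_or_gt_of_ne hx with hx | hx
    · exact div_nonneg_of_nonpos (Real.sinh_nonpos_iff.2 (by nlinarith))
        (Real.sinh_nonpos_iff.2 (by nlinarith))
    · exact div_nonneg (Real.sinh_nonneg_iff.2 (by positivity))
        (Real.sinh_nonneg_iff.2 (by positivity))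

theorem sinhQuot_mul_sinhQuot {b : ℝ} (hb : 0 < b) (a c x : ℝ) :
    sinhQuot a b x * sinhQuot b c x = sinhQuot a c x := by
  unfold sinhQuot
  split_ifs with hx
  · exact div_mul_div_cancel₀ hb.ne'
  · exact div_mul_div_cancel₀ (Real.sinh_ne_zero.2 (mul_ne_zero hb.ne' hx))

theorem isInfDivFun_sinhQuot {a b : ℝ} (ha : 0 < a) (hab : a ≤ b) :
    IsInfDivFun (sinhQuot a b) := by
  have hb : 0 < b := ha.trans_le hab
  refine IsInfDivFun.of_tendsto
    (F := fun n x => a / b * ∏ j ∈ Finset.range n,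
      (1 + (Real.pi * ((j : ℝ) + 1))⁻¹ ^ 2 * a ^ 2 * x ^ 2) /
        (1 + (Real.pi * ((j : ℝ) + 1))⁻¹ ^ 2 * b ^ 2 * x ^ 2)) (fun n => ?_) fun x => ?_
  · refine (IsInfDivFun.const (by positivity)).mul (IsInfDivFun.prod _ (fun j _ => ?_)
      fun j _ x => by positivity) (fun _ => by positivity)
      fun x => Finset.prod_nonneg fun j _ => by positivity
    exact IsInfDivFun.one_add_sq_div_one_add_sq (by positivity) (by gcongr)
  · by_cases hx : x = 0
    · simp [sinhQuot, hx]
    · simp only [sinhQuot, hx, if_false]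
      refine ((Real.tendsto_euler_sinh_prod (a * x)).div (Real.tendsto_euler_sinh_prod (b * x))
        (Real.sinh_ne_zero.2 (mul_ne_zero hb.ne' hx))).congr fun n => ?_
      rw [Pi.div_apply, mul_div_mul_comm, mul_div_mul_right _ _ hx, ← Finset.prod_div_distrib]
      simp_rw [mul_pow, mul_assoc]

theorem sinhProd_infdiv_mono {n : ℕ} (a a' b b' : Fin n → ℝ)
    (ha' : ∀ i, 0 < a' i) (haa' : ∀ i, a' i ≤ a i)
    (hb : ∀ i, 0 < b i) (hbb' : ∀ i, b i ≤ b' i)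
    (h : IsInfDivFun (sinhProd a b)) :
    IsInfDivFun (sinhProd a' b') := by
  have ha (i : Fin n) : 0 < a i := (ha' i).trans_le (haa' i)
  have hb' (i : Fin n) : 0 < b' i := (hb i).trans_le (hbb' i)
  have hprod {c d : Fin n → ℝ} (hc : ∀ i, 0 < c i) (hcd : ∀ i, c i ≤ d i) :
      IsInfDivFun (sinhProd c d) := by
    simp_rw [funext (sinhProd_eq_prod_sinhQuot c d)]
    exact IsInfDivFun.prod _ (fun i _ => isInfDivFun_sinhQuot (hc i) (hcd i))
      fun i _ => sinhQuot_nonneg (hc i) ((hc i).trans_le (hcd i))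
  have hnonneg {c d : Fin n → ℝ} (hc : ∀ i, 0 < c i) (hd : ∀ i, 0 < d i) (x : ℝ) :
      0 ≤ sinhProd c d x := by
    rw [sinhProd_eq_prod_sinhQuot]
    exact Finset.prod_nonneg fun i _ => sinhQuot_nonneg (hc i) (hd i) x
  have hmul {c d e : Fin n → ℝ} (hd : ∀ i, 0 < d i) (x : ℝ) :
      sinhProd c d x * sinhProd d e x = sinhProd c e x := by
    simp_rw [sinhProd_eq_prod_sinhQuot, ← Finset.prod_mul_distrib, sinhQuot_mul_sinhQuot (hd _)]
  have key := ((hprod ha' haa').mul h (hnonneg ha' ha) (hnonneg ha hb)).mul (hprod hb hbb')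
    (fun x => mul_nonneg (hnonneg ha' ha x) (hnonneg ha hb x)) (hnonneg hb hb')
  simpa only [hmul ha, hmul hb] using key
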